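/- Let β_n > β_{n−1} > ⋯ > β_1 ≥ 0 and c_1, …, c_{n−1} ∈ ℝ, and let β_* be the maximum of those β_j (j < n) for which β_n − β_j is not an integer, with β_* = 0 if no such β_j exists. Let w ∈ L¹[0,b] and let f be any linear combination of t^{β_n−1}, t^{β_n−2}, …, t^{β_n−⌈β_n−β_*⌉}. If u ∈ L¹[0,b] solves the fractional integral equation (c_1 I^{β_n−β_1} + ⋯ + c_{n−1} I^{β_n−β_{n−1}} + Id) u(t) = I^{β_n} w(t) + f(t) almost everywhere on [0,b], then u belongs to the intersection X_{β_1} ∩ ⋯ ∩ X_{β_n}; consequently u is a (strong) solution of the fractional differential equation (c_1 D^{β_1} + ⋯ + c_{n−1} D^{β_{n−1}} + D^{β_n}) u = w. -/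

import Mathlib

open MeasureTheory Set Filter Topology

open Classical in
/-- Riemann–Liouville fractional integral of order `α` with base point `0`;
`RL 0` is the identity operator. -/
noncomputable def RL (α : ℝ) (f : ℝ → ℝ) : ℝ → ℝ := fun t =>
  if α = 0 then f t
  else (1 / Real.Gamma α) * ∫ s in (0:ℝ)..t, (t - s) ^ (α - 1) * f s

/-- `g ∈ AC[0,b]`: `g t = g 0 + ∫₀ᵗ φ` for some `φ ∈ L¹[0,b]`. -/
def MemAC (b : ℝ) (g : ℝ → ℝ) : Prop :=
  ∃ φ : ℝ → ℝ, IntegrableOn φ (Set.Icc 0 b) volume ∧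
    ∀ t ∈ Set.Icc (0:ℝ) b, g t = g 0 + ∫ s in (0:ℝ)..t, φ s

/-- `g ∈ AC^n[0,b]`: `g ∈ C^{n-1}[0,b]` and `D^{n-1} g ∈ AC[0,b]`. -/
def MemACn (b : ℝ) (n : ℕ) (g : ℝ → ℝ) : Prop :=
  ContDiffOn ℝ (n - 1 : ℕ) g (Set.Icc 0 b) ∧
    MemAC b (iteratedDerivWithin (n - 1) g (Set.Icc 0 b))

/-- `f ∈ X_α`, the space of functions with summable fractional derivative of order `α`:
`f ∈ L¹[0,b]` and (for `α ≠ 0`) `I^{⌈α⌉-α} f ∈ AC^{⌈α⌉}[0,b]`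
(as an element of `L¹`, i.e. it has an `AC^{⌈α⌉}` representative); `X_0 = L¹[0,b]`. -/
def MemX (b : ℝ) (α : ℝ) (f : ℝ → ℝ) : Prop :=
  IntegrableOn f (Set.Icc 0 b) volume ∧
    (α ≠ 0 → ∃ g : ℝ → ℝ,
      g =ᵐ[volume.restrict (Set.Icc 0 b)] RL ((⌈α⌉₊ : ℝ) - α) f ∧ MemACn b ⌈α⌉₊ g)

/-- `φ` is the Riemann–Liouville fractional derivative of order `α` of `f`,
i.e. `D^α f = D^{⌈α⌉}(I^{⌈α⌉-α} f) = φ`, the last derivative taken in the weak sense: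
`D^{⌈α⌉-1}` of (the `AC^{⌈α⌉}` representative of) `I^{⌈α⌉-α} f` is an antiderivative of `φ`.
`D^0 = Id`. -/
def IsRLDeriv (b : ℝ) (α : ℝ) (f φ : ℝ → ℝ) : Prop :=
  IntegrableOn φ (Set.Icc 0 b) volume ∧
    ((α = 0 ∧ φ =ᵐ[volume.restrict (Set.Icc 0 b)] f) ∨
     (α ≠ 0 ∧ ∃ g : ℝ → ℝ,
        g =ᵐ[volume.restrict (Set.Icc 0 b)] RL ((⌈α⌉₊ : ℝ) - α) f ∧
        MemACn b ⌈α⌉₊ g ∧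
        ∀ t ∈ Set.Icc (0:ℝ) b,
          iteratedDerivWithin (⌈α⌉₊ - 1) g (Set.Icc 0 b) t =
            iteratedDerivWithin (⌈α⌉₊ - 1) g (Set.Icc 0 b) 0 + ∫ s in (0:ℝ)..t, φ s))

namespace FracAux

open scoped Convolution
open ContinuousLinearMap (mul)

/-- truncation to `(0,b]` -/
noncomputable def E (b : ℝ) (f : ℝ → ℝ) : ℝ → ℝ := (Ioc 0 b).indicator f

/-- truncated kernel -/
noncomputable def K (b α : ℝ) : ℝ → ℝ := E b (fun x => 1 / Real.Gamma α * x ^ (α - 1))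

lemma E_mem {b : ℝ} (f : ℝ → ℝ) {s : ℝ} (h : 0 < s) (h' : s ≤ b) : E b f s = f s :=
  indicator_of_mem (s := Ioc 0 b) ⟨h, h'⟩ f

lemma E_nonpos (b : ℝ) (f : ℝ → ℝ) {s : ℝ} (h : s ≤ 0) : E b f s = 0 :=
  indicator_of_notMem (s := Ioc 0 b) (fun h' => absurd h'.1 (not_lt.2 h)) f

lemma pow_integrableOn (b : ℝ) {p : ℝ} (hp : -1 < p) :
    IntegrableOn (fun t : ℝ => t ^ p) (Icc 0 b) volume := by
  rw [integrableOn_Icc_iff_integrableOn_Ioc]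
  rcases le_or_gt b 0 with h | h
  · simp [Ioc_eq_empty (not_lt.2 h)]
  · exact (intervalIntegrable_iff_integrableOn_Ioc_of_le h.le).1
      (intervalIntegral.intervalIntegrable_rpow' hp)

lemma E_integrable {b : ℝ} {f : ℝ → ℝ} (hf : IntegrableOn f (Icc 0 b) volume) :
    Integrable (E b f) volume := by
  rw [integrableOn_Icc_iff_integrableOn_Ioc] at hf
  exact (integrable_indicator_iff measurableSet_Ioc).2 hf

lemma K_integrable (b : ℝ) {α : ℝ} (hα : 0 < α) : Integrable (K b α) volume :=
  E_integrable ((pow_integrableOn b (by linarith)).const_mul _)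

lemma conv_zero_of_nonpos {b : ℝ} (f g : ℝ → ℝ) {t : ℝ} (ht : t ≤ 0) :
    (E b f ⋆[mul ℝ ℝ, volume] E b g) t = 0 := by
  rw [convolution_def]
  have : (fun s => (mul ℝ ℝ) (E b f s) (E b g (t - s))) = fun _ => 0 := by
    ext s
    simp only [ContinuousLinearMap.mul_apply']
    by_cases hs : 0 < s
    · have : E b g (t - s) = 0 := indicator_of_notMem (fun h => by linarith [h.1]) _
      rw [this, mul_zero]
    · have : E b f s = 0 := indicator_of_notMem (fun h => hs h.1) _
      rw [this, zero_mul]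
  rw [this, integral_zero]

lemma RL_eq_conv {b α : ℝ} (hα : 0 < α) (f : ℝ → ℝ) {t : ℝ} (ht : t ∈ Icc 0 b) :
    RL α f t = (E b f ⋆[mul ℝ ℝ, volume] K b α) t := by
  rw [convolution_def]
  have h1 : (fun s => (mul ℝ ℝ) (E b f s) (K b α (t - s))) =
      (Ioo 0 t).indicator (fun s => 1 / Real.Gamma α * ((t - s) ^ (α - 1) * f s)) := by
    ext s
    simp only [ContinuousLinearMap.mul_apply']
    by_cases hs : s ∈ Ioo 0 t
    · rw [indicator_of_mem hs, E_mem _ hs.1 (hs.2.le.trans ht.2), K,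
        E_mem _ (by linarith [hs.2]) (by linarith [hs.1, ht.2])]
      ring
    · rw [indicator_of_notMem hs]
      by_cases h0 : 0 < s
      · have : K b α (t - s) = 0 :=
          E_nonpos _ _ (not_lt.1 fun h => hs ⟨h0, by linarith⟩)
        rw [this, mul_zero]
      · have : E b f s = 0 := indicator_of_notMem (fun h => h0 h.1) _
        rw [this, zero_mul]
  rw [h1, integral_indicator measurableSet_Ioo, ← integral_Ioc_eq_integral_Ioo,
    ← intervalIntegral.integral_of_le ht.1, intervalIntegral.integral_const_mul, RL, if_neg hα.ne']

lemma RL_zero (f : ℝ → ℝ) : RL 0 f = f := by ext t; simp [RL]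

lemma RL_congr_at {b α : ℝ} (hα : α ≠ 0) {f g : ℝ → ℝ}
    (h : f =ᵐ[volume.restrict (Icc 0 b)] g) {t : ℝ} (ht : t ∈ Icc 0 b) :
    RL α f t = RL α g t := by
  simp only [RL, if_neg hα]
  congr 1
  rw [intervalIntegral.integral_of_le ht.1, intervalIntegral.integral_of_le ht.1]
  apply integral_congr_ae
  have := ae_restrict_of_ae_restrict_of_subset
    (Ioc_subset_Icc_self.trans (Icc_subset_Icc_right ht.2)) h
  filter_upwards [this] with s hs
  rw [hs]

lemma RL_congr {b α : ℝ} {f g : ℝ → ℝ}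
    (h : f =ᵐ[volume.restrict (Icc 0 b)] g) :
    RL α f =ᵐ[volume.restrict (Icc 0 b)] RL α g := by
  by_cases hα : α = 0
  · subst hα; simpa [RL_zero] using h
  · filter_upwards [ae_restrict_mem measurableSet_Icc] with t ht
    exact RL_congr_at hα h ht

lemma RL_integrable {b α : ℝ} (hα : 0 ≤ α) {f : ℝ → ℝ}
    (hf : IntegrableOn f (Icc 0 b) volume) : IntegrableOn (RL α f) (Icc 0 b) volume := by
  rcases hα.eq_or_lt with rfl | hα
  · simpa [RL_zero] using hf
  · have h := (E_integrable hf).integrable_convolution (mul ℝ ℝ) (K_integrable b hα)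
    refine IntegrableOn.congr_fun h.integrableOn (fun t ht => ?_) measurableSet_Icc
    exact (RL_eq_conv hα f ht).symm

lemma RL_add {b α : ℝ} (hα : 0 ≤ α) {f g : ℝ → ℝ}
    (hf : IntegrableOn f (Icc 0 b) volume) (hg : IntegrableOn g (Icc 0 b) volume) :
    RL α (f + g) =ᵐ[volume.restrict (Icc 0 b)] RL α f + RL α g := by
  rcases hα.eq_or_lt with rfl | hα
  · simp [RL_zero]
  · have h1 := (E_integrable hf).ae_convolution_exists (mul ℝ ℝ) (K_integrable b hα)
    have h2 := (E_integrable hg).ae_convolution_exists (mul ℝ ℝ) (K_integrable b hα)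
    filter_upwards [ae_restrict_mem measurableSet_Icc, ae_restrict_of_ae h1,
      ae_restrict_of_ae h2] with t ht h1 h2
    have : E b (f + g) = E b f + E b g := indicator_add _ _ _
    rw [Pi.add_apply, RL_eq_conv hα _ ht, RL_eq_conv hα _ ht, RL_eq_conv hα _ ht, this,
      h1.add_distrib h2]

lemma RL_smul (α c : ℝ) (f : ℝ → ℝ) : RL α (c • f) = c • RL α f := by
  ext t
  by_cases hα : α = 0
  · simp [RL, hα]
  · simp only [RL, if_neg hα, Pi.smul_apply, smul_eq_mul]
    have : ∀ s, (t - s) ^ (α - 1) * (c * f s) = c * ((t - s) ^ (α - 1) * f s) := fun s => by ring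
    simp_rw [this, intervalIntegral.integral_const_mul]
    ring

lemma beta_real {s p t : ℝ} (hs : 0 < s) (hp : 0 < p) (ht : 0 < t) :
    ∫ x in (0:ℝ)..t, (t - x) ^ (p - 1) * x ^ (s - 1) =
      t ^ (s + p - 1) * (Real.Gamma s * Real.Gamma p / Real.Gamma (s + p)) := by
  have h := Complex.betaIntegral_scaled s p ht
  rw [Complex.betaIntegral_eq_Gamma_mul_div _ _ (by simpa) (by simpa), ← Complex.ofReal_add,
    Complex.Gamma_ofReal, Complex.Gamma_ofReal, Complex.Gamma_ofReal] at h
  have h2 : ∫ x in (0:ℝ)..t, (x : ℂ) ^ ((s:ℂ) - 1) * ((t : ℂ) - x) ^ ((p:ℂ) - 1) =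
      ((∫ x in (0:ℝ)..t, (t - x) ^ (p - 1) * x ^ (s - 1) : ℝ) : ℂ) := by
    rw [← intervalIntegral.integral_ofReal]
    apply intervalIntegral.integral_congr
    intro x hx
    rw [uIcc_of_le ht.le] at hx
    simp only
    push_cast
    rw [Complex.ofReal_cpow (by linarith [hx.2]), Complex.ofReal_cpow hx.1]
    push_cast
    ring
  rw [h2] at h
  have h3 : (t : ℂ) ^ (((s + p : ℝ) : ℂ) - 1) = ((t ^ (s + p - 1) : ℝ) : ℂ) := by
    rw [Complex.ofReal_cpow ht.le]; push_cast; rfl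
  rw [h3] at h
  exact_mod_cast h

lemma RL_pow {α p t : ℝ} (hα : 0 ≤ α) (hp : 0 < p) (ht : 0 < t) :
    RL α (fun s => s ^ (p - 1)) t =
      Real.Gamma p / Real.Gamma (p + α) * t ^ (p + α - 1) := by
  rcases hα.eq_or_lt with rfl | hα
  · have := (Real.Gamma_pos_of_pos hp).ne'
    simp [RL_zero, div_self this]
  · have h1 := (Real.Gamma_pos_of_pos hα).ne'
    rw [RL, if_neg hα.ne', beta_real hp hα ht]
    field_simp

lemma K_conv_K {b α β t : ℝ} (hα : 0 < α) (hβ : 0 < β) (ht : t ≤ b) :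
    (K b β ⋆[mul ℝ ℝ, volume] K b α) t = K b (β + α) t := by
  rcases le_or_gt t 0 with h | h
  · rw [K, K, conv_zero_of_nonpos _ _ h, K, E, indicator_of_notMem (fun h' => by linarith [h'.1])]
  · conv_lhs => rw [K]
    rw [← RL_eq_conv hα _ ⟨h.le, ht⟩]
    have h1 := RL_smul α (1 / Real.Gamma β) (fun s => s ^ (β - 1))
    have h2 : ((1 / Real.Gamma β) • fun s : ℝ => s ^ (β - 1)) =
      fun x => 1 / Real.Gamma β * x ^ (β - 1) := rfl
    rw [← h2, h1, Pi.smul_apply, RL_pow hα.le hβ h, K, E_mem _ h ht]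
    have h3 := (Real.Gamma_pos_of_pos hβ).ne'
    rw [smul_eq_mul]
    field_simp

lemma RL_RL {b α β : ℝ} (hα : 0 ≤ α) (hβ : 0 ≤ β) {f : ℝ → ℝ}
    (hf : IntegrableOn f (Icc 0 b) volume) :
    RL α (RL β f) =ᵐ[volume.restrict (Icc 0 b)] RL (β + α) f := by
  rcases hα.eq_or_lt with rfl | hα
  · simp [RL_zero]
  rcases hβ.eq_or_lt with rfl | hβ
  · simp [RL_zero]
  have hE := E_integrable hf
  have hKa := K_integrable b hα
  have hKb := K_integrable b hβ
  have h1 := hE.norm.ae_convolution_exists (mul ℝ ℝ)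
    (hKb.norm.integrable_convolution (mul ℝ ℝ) hKa.norm)
  filter_upwards [ae_restrict_mem measurableSet_Icc, ae_restrict_of_ae h1] with t ht h1
  have hassoc := convolution_assoc (mul ℝ ℝ) (mul ℝ ℝ) (mul ℝ ℝ) (mul ℝ ℝ)
    (fun x y z => by simp [mul_assoc]) hE.aestronglyMeasurable hKb.aestronglyMeasurable
    hKa.aestronglyMeasurable (hE.ae_convolution_exists (mul ℝ ℝ) hKb)
    (hKb.norm.ae_convolution_exists (mul ℝ ℝ) hKa.norm) h1
  rw [RL_eq_conv hα _ ht, RL_eq_conv (add_pos hβ hα) _ ht]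
  have e1 : (E b (RL β f) ⋆[mul ℝ ℝ, volume] K b α) t =
      ((E b f ⋆[mul ℝ ℝ, volume] K b β) ⋆[mul ℝ ℝ, volume] K b α) t := by
    rw [convolution_def, convolution_def]
    congr 1
    ext s
    simp only [ContinuousLinearMap.mul_apply']
    rcases le_or_gt s 0 with hs | hs
    · have : (E b f ⋆[mul ℝ ℝ, volume] K b β) s = 0 := conv_zero_of_nonpos _ _ hs
      rw [this, E_nonpos _ _ hs]
    rcases le_or_gt s b with hsb | hsb
    · rw [← RL_eq_conv hβ f ⟨hs.le, hsb⟩, E_mem _ hs hsb]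
    · have : K b α (t - s) = 0 :=
        E_nonpos _ _ (by linarith [ht.2])
      rw [this, mul_zero, mul_zero]
  have e2 : (E b f ⋆[mul ℝ ℝ, volume] (K b β ⋆[mul ℝ ℝ, volume] K b α)) t =
      (E b f ⋆[mul ℝ ℝ, volume] K b (β + α)) t := by
    rw [convolution_def, convolution_def]
    congr 1
    ext s
    simp only [ContinuousLinearMap.mul_apply']
    rcases le_or_gt s 0 with hs | hs
    · have : E b f s = 0 := indicator_of_notMem (fun h => by linarith [h.1]) _
      rw [this, zero_mul, zero_mul]
    · rw [K_conv_K hα hβ (by linarith [ht.2])]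
  rw [e1, hassoc, e2]

def IsRep (b : ℝ) (P : Submodule ℝ (ℝ → ℝ)) (γ : ℝ) (φ f : ℝ → ℝ) : Prop :=
  IntegrableOn φ (Icc 0 b) volume ∧
    ∃ p ∈ P, f =ᵐ[volume.restrict (Icc 0 b)] RL γ φ + p

def InX (b : ℝ) (P : Submodule ℝ (ℝ → ℝ)) (γ : ℝ) (f : ℝ → ℝ) : Prop :=
  ∃ φ, IsRep b P γ φ f

section
variable {b γ δ α : ℝ} {P Q : Submodule ℝ (ℝ → ℝ)} {φ ψ f g : ℝ → ℝ}

lemma RL_fun_zero (γ : ℝ) : RL γ 0 = 0 := by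
  have := RL_smul γ 0 0
  simpa using this

lemma IsRep.add (hγ : 0 ≤ γ) (h1 : IsRep b P γ φ f) (h2 : IsRep b P γ ψ g) :
    IsRep b P γ (φ + ψ) (f + g) := by
  obtain ⟨i1, p, hp, e1⟩ := h1
  obtain ⟨i2, q, hq, e2⟩ := h2
  refine ⟨i1.add i2, p + q, P.add_mem hp hq, ?_⟩
  filter_upwards [e1, e2, RL_add hγ i1 i2] with t e1 e2 e3
  simp only [Pi.add_apply] at *
  rw [e1, e2, e3]; ring

lemma IsRep.smul (c : ℝ) (h1 : IsRep b P γ φ f) : IsRep b P γ (c • φ) (c • f) := by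
  obtain ⟨i1, p, hp, e1⟩ := h1
  refine ⟨i1.smul c, c • p, P.smul_mem c hp, ?_⟩
  filter_upwards [e1] with t e1
  rw [RL_smul]
  simp only [Pi.add_apply, Pi.smul_apply, smul_eq_mul] at *
  rw [e1]; ring

lemma IsRep.of_mem (hf : f ∈ P) : IsRep b P γ 0 f := by
  refine ⟨integrableOn_zero, f, hf, ?_⟩
  rw [RL_fun_zero, zero_add]

lemma IsRep.of_RL (hφ : IntegrableOn φ (Icc 0 b) volume) : IsRep b P γ φ (RL γ φ) :=
  ⟨hφ, 0, P.zero_mem, by rw [add_zero]⟩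

lemma IsRep.congr (h : IsRep b P γ φ f) (hfg : f =ᵐ[volume.restrict (Icc 0 b)] g) :
    IsRep b P γ φ g := by
  obtain ⟨i1, p, hp, e1⟩ := h
  exact ⟨i1, p, hp, hfg.symm.trans e1⟩

lemma IsRep.sum (hγ : 0 ≤ γ) {ι : Type*} (s : Finset ι) (φ f : ι → ℝ → ℝ)
    (h : ∀ j ∈ s, IsRep b P γ (φ j) (f j)) : IsRep b P γ (∑ j ∈ s, φ j) (∑ j ∈ s, f j) := by
  classical
  induction s using Finset.induction_on with
  | empty => simpa using IsRep.of_mem P.zero_mem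
  | insert a s ha ih =>
    rw [Finset.sum_insert ha, Finset.sum_insert ha]
    exact (h a (by simp)).add hγ (ih fun j hj => h j (by simp [hj]))

lemma InX.add (hγ : 0 ≤ γ) (h1 : InX b P γ f) (h2 : InX b P γ g) : InX b P γ (f + g) :=
  let ⟨_, h1⟩ := h1
  let ⟨_, h2⟩ := h2
  ⟨_, h1.add hγ h2⟩

lemma InX.smul (c : ℝ) (h1 : InX b P γ f) : InX b P γ (c • f) :=
  let ⟨_, h1⟩ := h1
  ⟨_, h1.smul c⟩

lemma InX.congr (h : InX b P γ f) (hfg : f =ᵐ[volume.restrict (Icc 0 b)] g) : InX b P γ g :=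
  let ⟨_, h⟩ := h
  ⟨_, h.congr hfg⟩

lemma InX.sum (hγ : 0 ≤ γ) {ι : Type*} (s : Finset ι) (f : ι → ℝ → ℝ)
    (h : ∀ j ∈ s, InX b P γ (f j)) : InX b P γ (∑ j ∈ s, f j) := by
  classical
  induction s using Finset.induction_on with
  | empty => exact ⟨0, by simpa using IsRep.of_mem P.zero_mem⟩
  | insert a s ha ih =>
    rw [Finset.sum_insert ha]
    exact (h a (by simp)).add hγ (ih fun j hj => h j (by simp [hj]))

lemma InX.of_RL (hδ : 0 ≤ δ) (hδγ : δ ≤ γ) (hφ : IntegrableOn φ (Icc 0 b) volume) :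
    InX b P δ (RL γ φ) := by
  have h := RL_RL (b := b) hδ (sub_nonneg.2 hδγ) hφ
  rw [sub_add_cancel] at h
  exact InX.congr ⟨_, IsRep.of_RL (RL_integrable (sub_nonneg.2 hδγ) hφ)⟩ h

lemma ae_pos (b : ℝ) : ∀ᵐ t ∂(volume.restrict (Icc (0:ℝ) b)), 0 < t ∧ t ≤ b := by
  rw [← Measure.restrict_congr_set (Ioc_ae_eq_Icc (μ := volume) (a := (0:ℝ)) (b := b))]
  exact ae_restrict_mem measurableSet_Ioc

lemma RL_pow_ae (b : ℝ) {q : ℝ} (hα : 0 ≤ α) (hq : -1 < q) :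
    RL α (fun t => t ^ q) =ᵐ[volume.restrict (Icc 0 b)]
      (Real.Gamma (q + 1) / Real.Gamma (q + 1 + α)) • (fun t => t ^ (q + α)) := by
  filter_upwards [ae_pos b] with t ht
  have := RL_pow hα (show 0 < q + 1 by linarith) ht.1
  rw [show q + 1 - 1 = q by ring, show q + 1 + α - 1 = q + α by ring] at this
  exact this

lemma InX.of_pow {q : ℝ} (hγ : 0 ≤ γ) (hq : γ - 1 < q) : InX b P γ (fun t => t ^ q) := by
  have h1 := RL_pow_ae b hγ (show -1 < q - γ by linarith)
  rw [sub_add_cancel] at h1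
  have hc : 0 < Real.Gamma (q - γ + 1) / Real.Gamma (q - γ + 1 + γ) :=
    div_pos (Real.Gamma_pos_of_pos (by linarith)) (Real.Gamma_pos_of_pos (by linarith))
  have h2 : InX b P γ (RL γ (fun t => t ^ (q - γ))) :=
    ⟨_, IsRep.of_RL (pow_integrableOn b (by linarith))⟩
  have h3 := (h2.congr h1).smul (Real.Gamma (q - γ + 1) / Real.Gamma (q - γ + 1 + γ))⁻¹
  rwa [smul_smul, inv_mul_cancel₀ hc.ne', one_smul] at h3

lemma IsRep.RL (hα : 0 ≤ α) (hγ : 0 ≤ γ)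
    (hP : ∀ p ∈ P, IntegrableOn p (Icc 0 b) volume ∧
      ∃ q ∈ Q, RL α p =ᵐ[volume.restrict (Icc 0 b)] q)
    (h : IsRep b P γ φ f) : IsRep b Q (γ + α) φ (RL α f) := by
  obtain ⟨i1, p, hp, e1⟩ := h
  obtain ⟨i2, q, hq, e2⟩ := hP p hp
  refine ⟨i1, q, hq, ?_⟩
  filter_upwards [RL_congr (α := α) e1, RL_add hα (RL_integrable hγ i1) i2, e2, RL_RL hα hγ i1]
    with t h1 h2 h3 h4
  simp only [Pi.add_apply] at *
  rw [h1, h2, h3, h4]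

lemma InX.RL (hα : 0 ≤ α) (hγ : 0 ≤ γ) (hδ : 0 ≤ δ) (hle : δ ≤ γ + α)
    (hP : ∀ p ∈ P, IntegrableOn p (Icc 0 b) volume ∧ InX b Q δ (RL α p))
    (h : InX b P γ f) : InX b Q δ (RL α f) := by
  obtain ⟨φ, i1, p, hp, e1⟩ := h
  obtain ⟨i2, h2⟩ := hP p hp
  refine ((InX.of_RL hδ hle i1).add hδ h2).congr ?_
  filter_upwards [RL_congr (α := α) e1, RL_add hα (RL_integrable hγ i1) i2, RL_RL hα hγ i1]
    with t h1 h2 h4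
  simp only [Pi.add_apply] at *
  rw [h1, h2, h4]

lemma span_RL (hα : 0 ≤ α) (S : Set (ℝ → ℝ)) (C : (ℝ → ℝ) → Prop) (h0 : C 0)
    (hadd : ∀ f g, C f → C g → C (f + g)) (hsmul : ∀ (c : ℝ) f, C f → C (c • f))
    (hcongr : ∀ f g, C f → f =ᵐ[volume.restrict (Icc 0 b)] g → C g)
    (hS : ∀ p ∈ S, IntegrableOn p (Icc 0 b) volume ∧ C (RL α p)) :
    ∀ p ∈ Submodule.span ℝ S, IntegrableOn p (Icc 0 b) volume ∧ C (RL α p) := by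
  intro p hp
  induction hp using Submodule.span_induction with
  | mem x hx => exact hS x hx
  | zero => exact ⟨integrableOn_zero, by rwa [RL_fun_zero]⟩
  | add x y _ _ hx hy =>
    exact ⟨hx.1.add hy.1, hcongr _ _ (hadd _ _ hx.2 hy.2) (RL_add hα hx.1 hy.1).symm⟩
  | smul c x _ hx => exact ⟨hx.1.smul c, by rw [RL_smul]; exact hsmul _ _ hx.2⟩

lemma span_InX (hα : 0 ≤ α) (hδ : 0 ≤ δ) (S : Set (ℝ → ℝ))
    (hS : ∀ p ∈ S, IntegrableOn p (Icc 0 b) volume ∧ InX b Q δ (RL α p)) :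
    ∀ p ∈ Submodule.span ℝ S, IntegrableOn p (Icc 0 b) volume ∧ InX b Q δ (RL α p) :=
  span_RL hα S (InX b Q δ) ⟨0, IsRep.of_mem Q.zero_mem⟩ (fun _ _ h1 h2 => h1.add hδ h2)
    (fun c _ h => h.smul c) (fun _ _ h h' => h.congr h') hS

/-- all admissible powers -/
def Pw (γ : ℝ) : Submodule ℝ (ℝ → ℝ) :=
  Submodule.span ℝ {f | ∃ k : ℕ, 1 ≤ k ∧ -1 < γ - k ∧ f = fun t : ℝ => t ^ (γ - k)}

/-- the first `N` powers -/
def P0 (γ : ℝ) (N : ℕ) : Submodule ℝ (ℝ → ℝ) :=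
  Submodule.span ℝ {f | ∃ k : ℕ, 1 ≤ k ∧ k ≤ N ∧ f = fun t : ℝ => t ^ (γ - k)}

lemma Pw_RL (b γ : ℝ) (hα : 0 ≤ α) : ∀ p ∈ Pw γ, IntegrableOn p (Icc 0 b) volume ∧
      ∃ q ∈ Pw (γ + α), RL α p =ᵐ[volume.restrict (Icc 0 b)] q := by
  refine span_RL hα _ (fun f => ∃ q ∈ Pw (γ + α), f =ᵐ[volume.restrict (Icc 0 b)] q)
    ⟨0, Submodule.zero_mem _, by rfl⟩ ?_ ?_ ?_ ?_
  · rintro f g ⟨p, hp, e⟩ ⟨q, hq, e'⟩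
    exact ⟨p + q, Submodule.add_mem _ hp hq, e.add e'⟩
  · rintro c f ⟨p, hp, e⟩
    exact ⟨c • p, Submodule.smul_mem _ c hp, e.const_smul c⟩
  · rintro f g ⟨p, hp, e⟩ h
    exact ⟨p, hp, h.symm.trans e⟩
  · rintro _ ⟨k, hk, hk', rfl⟩
    refine ⟨pow_integrableOn b hk', _, ?_, RL_pow_ae b hα hk'⟩
    apply Submodule.smul_mem
    apply Submodule.subset_span
    refine ⟨k, hk, by linarith, ?_⟩
    ext t; congr 1; ring

/-- iterated primitive -/
noncomputable def J (h : ℝ → ℝ) : ℝ → ℝ := fun t => ∫ s in (0:ℝ)..t, h s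

lemma J_eq_RL (h : ℝ → ℝ) : J h = RL 1 h := by
  ext t; simp [J, RL]

lemma J_iter_ae (hφ : IntegrableOn φ (Icc 0 b) volume) (m : ℕ) :
    (J^[m]) φ =ᵐ[volume.restrict (Icc 0 b)] RL m φ := by
  induction m with
  | zero => simp [RL_zero]
  | succ m ih =>
    rw [Function.iterate_succ_apply', J_eq_RL]
    refine (RL_congr ih).trans ?_
    have := RL_RL (b := b) zero_le_one (Nat.cast_nonneg m) hφ
    simpa using this

lemma J_continuousOn (hb : 0 < b) (hφ : IntegrableOn φ (Icc 0 b) volume) :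
    ContinuousOn (J φ) (Icc 0 b) := by
  rw [← uIcc_of_le hb.le] at *
  exact intervalIntegral.continuousOn_primitive_interval hφ

lemma J_hasDeriv (hφ : ContinuousOn φ (Icc 0 b)) {t : ℝ} (ht : t ∈ Icc 0 b) :
    HasDerivWithinAt (J φ) (φ t) (Icc 0 b) t := by
  have : Fact (t ∈ Icc 0 b) := ⟨ht⟩
  refine intervalIntegral.integral_hasDerivWithinAt_right (t := Icc 0 b) ?_ ?_ (hφ t ht)
  · exact (hφ.mono (Icc_subset_Icc_right ht.2)).intervalIntegrable_of_Icc ht.1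
  · exact hφ.stronglyMeasurableAtFilter_nhdsWithin measurableSet_Icc t

lemma J_iter (hb : 0 < b) (hφ : IntegrableOn φ (Icc 0 b) volume) (m : ℕ) :
    ContDiffOn ℝ m (J^[m + 1] φ) (Icc 0 b) ∧
      EqOn (iteratedDerivWithin m (J^[m + 1] φ) (Icc 0 b)) (J φ) (Icc 0 b) := by
  have hu := uniqueDiffOn_Icc hb
  induction m with
  | zero =>
    constructor
    · simpa using J_continuousOn hb hφ
    · intro t _; simp
  | succ m ih =>
    have hc : ContinuousOn (J^[m + 1] φ) (Icc 0 b) := ih.1.continuousOn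
    have hd : EqOn (derivWithin (J^[m + 1 + 1] φ) (Icc 0 b)) (J^[m + 1] φ) (Icc 0 b) := by
      intro t ht
      rw [Function.iterate_succ_apply']
      exact (J_hasDeriv hc ht).derivWithin (hu t ht)
    constructor
    · push_cast
      rw [contDiffOn_succ_iff_derivWithin hu]
      refine ⟨?_, by simp, ih.1.congr hd⟩
      intro t ht
      rw [Function.iterate_succ_apply']
      exact (J_hasDeriv hc ht).differentiableWithinAt
    · intro t ht
      rw [iteratedDerivWithin_succ']
      rw [iteratedDerivWithin_congr hd ht]
      exact ih.2 ht

lemma Pw_smooth (hb : 0 < b) (m : ℕ) : ∀ p ∈ Pw ((m + 1 : ℕ) : ℝ),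
    ContDiffOn ℝ m p (Icc 0 b) ∧
      ∃ c : ℝ, ∀ t ∈ Icc 0 b, iteratedDerivWithin m p (Icc 0 b) t = c := by
  have hu := uniqueDiffOn_Icc hb
  intro p hp
  induction hp using Submodule.span_induction with
  | mem x hx =>
    obtain ⟨k, hk, hk', rfl⟩ := hx
    have hkm : k ≤ m + 1 := by
      have : (k : ℝ) < ((m + 1 + 1 : ℕ) : ℝ) := by push_cast at *; linarith
      have := Nat.cast_lt.1 this
      omega
    have : (fun t : ℝ => t ^ (((m + 1 : ℕ) : ℝ) - k)) = fun t => t ^ (m + 1 - k) := by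
      ext t
      rw [← Nat.cast_sub hkm, Real.rpow_natCast]
    rw [this]
    refine ⟨(contDiff_id.pow _).contDiffOn, ?_⟩
    have hcd : ContDiff ℝ m (fun t : ℝ => t ^ (m + 1 - k)) := contDiff_id.pow _
    refine ⟨(m + 1 - k).descFactorial m, fun t ht => ?_⟩
    rw [iteratedDerivWithin_eq_iteratedDeriv hu hcd.contDiffAt ht, iteratedDeriv_pow]
    have : m + 1 - k - m = 0 := by omega
    simp [this]
  | zero => exact ⟨contDiffOn_const, 0, fun t ht => by simp⟩
  | add x y _ _ hx hy =>
    obtain ⟨hx, c, hc⟩ := hx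
    obtain ⟨hy, c', hc'⟩ := hy
    refine ⟨hx.add hy, c + c', fun t ht => ?_⟩
    rw [iteratedDerivWithin_add ht hu (hx t ht) (hy t ht), hc t ht, hc' t ht]
  | smul a x _ hx =>
    obtain ⟨hx, c, hc⟩ := hx
    refine ⟨hx.const_smul a, a * c, fun t ht => ?_⟩
    rw [iteratedDerivWithin_const_smul ht hu a (hx t ht), hc t ht, smul_eq_mul]

lemma IsRep.isRLDeriv (hb : 0 < b) (hγ : 0 ≤ γ) (h : IsRep b (Pw γ) γ φ f) :
    IsRLDeriv b γ f φ := by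
  refine ⟨h.1, ?_⟩
  rcases hγ.eq_or_lt with rfl | hγ'
  · left
    refine ⟨rfl, ?_⟩
    obtain ⟨_, p, hp, e⟩ := h
    have : p = 0 := by
      have h0 : {f | ∃ k : ℕ, 1 ≤ k ∧ -1 < (0:ℝ) - k ∧ f = fun t : ℝ => t ^ ((0:ℝ) - k)} = ∅ := by
        ext f
        simp only [mem_ofPred_eq, mem_empty_iff_false, iff_false]
        rintro ⟨k, hk, hk', _⟩
        have : (1:ℝ) ≤ k := by exact_mod_cast hk
        linarith
      rw [Pw, h0, Submodule.span_empty] at hp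
      simpa using hp
    rw [this, add_zero, RL_zero] at e
    exact e.symm
  · right
    refine ⟨hγ'.ne', ?_⟩
    obtain ⟨m, hm⟩ : ∃ m, ⌈γ⌉₊ = m + 1 :=
      Nat.exists_eq_succ_of_ne_zero (Nat.ceil_pos.2 hγ').ne'
    have hle : 0 ≤ (⌈γ⌉₊ : ℝ) - γ := sub_nonneg.2 (Nat.le_ceil γ)
    have hR := IsRep.RL hle hγ (Pw_RL b γ hle) h
    rw [add_sub_cancel, hm] at hR
    rw [hm]
    obtain ⟨i, p, hp, e⟩ := hR
    obtain ⟨hps, c, hc⟩ := Pw_smooth hb m p hp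
    obtain ⟨hJ, hJ'⟩ := J_iter hb i m
    have hu := uniqueDiffOn_Icc hb
    have hD : ∀ t ∈ Icc 0 b, iteratedDerivWithin m (J^[m + 1] φ + p) (Icc 0 b) t = J φ t + c := by
      intro t ht
      rw [iteratedDerivWithin_add ht hu (hJ t ht) (hps t ht), hc t ht, hJ' ht]
    have hfin : ∀ t ∈ Icc 0 b, iteratedDerivWithin m (J^[m + 1] φ + p) (Icc 0 b) t =
        iteratedDerivWithin m (J^[m + 1] φ + p) (Icc 0 b) 0 + ∫ s in (0:ℝ)..t, φ s := by
      intro t ht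
      rw [hD t ht, hD 0 ⟨le_rfl, hb.le⟩]
      simp [J, add_comm]
    refine ⟨J^[m + 1] φ + p, ?_, ⟨?_, φ, i, ?_⟩, ?_⟩
    · refine EventuallyEq.trans ?_ e.symm
      exact (J_iter_ae i (m + 1)).add (by rfl)
    · rw [Nat.add_sub_cancel]; exact hJ.add hps
    · simpa using hfin
    · simpa using hfin

lemma memX_of_isRLDeriv (hf : IntegrableOn f (Icc 0 b) volume) (h : IsRLDeriv b γ f φ) :
    MemX b γ f := by
  refine ⟨hf, fun h0 => ?_⟩
  rcases h.2 with h | h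
  · exact absurd h.1 h0
  · obtain ⟨_, g, h1, h2, _⟩ := h
    exact ⟨g, h1, h2⟩

end

end FracAux

open FracAux

/-- If `u ∈ L¹[0,b]` solves the fractional integral equation
`(c_1 I^{β_n-β_1} + ⋯ + c_{n-1} I^{β_n-β_{n-1}} + Id) u = I^{β_n} w + f` with
`f ∈ ⟨t^{β_n-1}, …, t^{β_n-⌈β_n-β_*⌉}⟩`, then `u ∈ X_{β_1} ∩ ⋯ ∩ X_{β_n}` and consequently
`u` is a strong solution of `(c_1 D^{β_1} + ⋯ + c_{n-1} D^{β_{n-1}} + D^{β_n}) u = w`. -/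
theorem strong_solution_of_integral_equation (b : ℝ) (hb : 0 < b) (n : ℕ) (hn : 1 ≤ n)
    (β c : ℕ → ℝ)
    (hmono : ∀ i j : ℕ, 1 ≤ i → i < j → j ≤ n → β i < β j) (hβ1 : 0 ≤ β 1)
    (βstar : ℝ)
    (hstar :
      IsGreatest {x : ℝ | ∃ j, 1 ≤ j ∧ j < n ∧ x = β j ∧ ∀ z : ℤ, β n - β j ≠ (z:ℝ)} βstar ∨
      ({x : ℝ | ∃ j, 1 ≤ j ∧ j < n ∧ x = β j ∧ ∀ z : ℤ, β n - β j ≠ (z:ℝ)} = ∅ ∧ βstar = 0))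
    (w : ℝ → ℝ) (hw : IntegrableOn w (Set.Icc 0 b) volume)
    (d : ℕ → ℝ) (u : ℝ → ℝ) (hu : IntegrableOn u (Set.Icc 0 b) volume)
    (heq : ∀ᵐ t ∂(volume.restrict (Set.Icc (0:ℝ) b)),
      (∑ j ∈ Finset.Ico 1 n, c j * RL (β n - β j) u t) + u t
        = RL (β n) w t + ∑ k ∈ Finset.Icc 1 ⌈β n - βstar⌉₊, d k * t ^ (β n - (k:ℝ))) :
    (∀ j, 1 ≤ j → j ≤ n → MemX b (β j) u) ∧
    ∃ φ : ℕ → ℝ → ℝ, (∀ j, 1 ≤ j → j ≤ n → IsRLDeriv b (β j) u (φ j)) ∧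
      (fun t => (∑ j ∈ Finset.Ico 1 n, c j * φ j t) + φ n t)
        =ᵐ[volume.restrict (Set.Icc (0:ℝ) b)] w := by
  have hpos : ∀ j, 1 ≤ j → j ≤ n → 0 ≤ β j := by
    intro j h1 h2
    rcases h1.eq_or_lt with rfl | h
    · exact hβ1
    · exact hβ1.trans (hmono 1 j le_rfl h h2).le
  have hB : 0 ≤ β n := hpos n hn le_rfl
  have hs : 0 ≤ βstar ∧ βstar ≤ β n := by
    rcases hstar with h | h
    · obtain ⟨j, h1, h2, h3, _⟩ := h.1
      rw [h3]
      exact ⟨hpos j h1 h2.le, (hmono j n h1 h2 le_rfl).le⟩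
    · rw [h.2]; exact ⟨le_rfl, hB⟩
  obtain ⟨N, hN⟩ : ∃ N, N = ⌈β n - βstar⌉₊ := ⟨_, rfl⟩
  have hNlt : (N : ℝ) < β n - βstar + 1 := by
    rw [hN]; exact Nat.ceil_lt_add_one (by linarith [hs.2])
  have hdich : ∀ j, 1 ≤ j → j < n →
      (∃ m : ℕ, β n - β j = m) ∨ -1 < β n - β j - N := by
    intro j h1 h2
    by_cases hz : ∃ z : ℤ, β n - β j = z
    · left
      obtain ⟨z, hz⟩ := hz
      have hz0 : 0 ≤ z := by
        have := hmono j n h1 h2 le_rfl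
        have h' : (0:ℝ) ≤ z := by linarith
        exact_mod_cast h'
      refine ⟨z.toNat, ?_⟩
      rw [hz]
      have : ((z.toNat : ℤ) : ℝ) = z := by rw [Int.toNat_of_nonneg hz0]
      rw [← this, Int.cast_natCast]
    · right
      push Not at hz
      rcases hstar with h | h
      · have := h.2 ⟨j, h1, h2, rfl, hz⟩
        linarith
      · exfalso
        have : β j ∈ (∅ : Set ℝ) := h.1 ▸ ⟨j, h1, h2, rfl, hz⟩
        exact this
  obtain ⟨δ, hδ, hδle⟩ : ∃ δ : ℝ, 0 < δ ∧ ∀ j, 1 ≤ j → j < n → δ ≤ β n - β j := by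
    by_cases h : n = 1
    · exact ⟨1, one_pos, fun j h1 h2 => by omega⟩
    · refine ⟨β n - β (n - 1), sub_pos.2 (hmono _ _ (by omega) (by omega) le_rfl), ?_⟩
      intro j h1 h2
      rcases (show j ≤ n - 1 by omega).eq_or_lt with rfl | h3
      · exact le_rfl
      · linarith [hmono j (n - 1) h1 h3 (by omega)]
  rw [← hN] at heq
  have hu' : (RL (β n) w + ∑ k ∈ Finset.Icc 1 N, d k • (fun t : ℝ => t ^ (β n - (k:ℝ)))) +
      ∑ j ∈ Finset.Ico 1 n, (-c j) • RL (β n - β j) u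
        =ᵐ[volume.restrict (Icc 0 b)] u := by
    filter_upwards [heq] with t ht
    simp only [Pi.add_apply, Finset.sum_apply, Pi.smul_apply, smul_eq_mul, neg_mul,
      Finset.sum_neg_distrib]
    linarith
  have hexp : ∀ k, k ≤ N → -1 < β n - (k:ℝ) := by
    intro k hk
    have : (k:ℝ) ≤ N := by exact_mod_cast hk
    linarith [hs.1]
  have hboot : ∀ m : ℕ, InX b (P0 (β n) N) (min (m * δ) (β n)) u := by
    intro m
    induction m with
    | zero =>
      have h0 : min (((0:ℕ):ℝ) * δ) (β n) = 0 := by simp [hB]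
      rw [h0]
      refine ⟨u, ?_⟩
      have := IsRep.of_RL (P := P0 (β n) N) (γ := 0) hu
      rwa [RL_zero] at this
    | succ m ih =>
      have hg : 0 ≤ min ((m:ℝ) * δ) (β n) := le_min (by positivity) hB
      have hg' : 0 ≤ min (((m + 1 : ℕ):ℝ) * δ) (β n) := le_min (by positivity) hB
      refine InX.congr ?_ hu'
      refine InX.add hg' (InX.add hg' ?_ ?_) ?_
      · exact InX.of_RL hg' (min_le_right _ _) hw
      · refine InX.sum hg' _ _ fun k hk => InX.smul _ ?_
        rw [Finset.mem_Icc] at hk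
        exact ⟨0, IsRep.of_mem (Submodule.subset_span ⟨k, hk.1, hk.2, rfl⟩)⟩
      · refine InX.sum hg' _ _ fun j hj => InX.smul _ ?_
        rw [Finset.mem_Ico] at hj
        have hd := hδle j hj.1 hj.2
        have hα : 0 ≤ β n - β j := by linarith
        refine InX.RL hα hg hg' ?_ ?_ ih
        · rcases le_total ((m:ℝ) * δ) (β n) with h | h
          · rw [min_eq_left h]
            refine (min_le_left _ _).trans ?_
            push_cast; linarith
          · rw [min_eq_right h]
            refine (min_le_right _ _).trans ?_
            linarith
        · refine span_InX hα hg' _ ?_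
          rintro _ ⟨k, hk1, hk2, rfl⟩
          have hkN : (k:ℝ) ≤ N := by exact_mod_cast hk2
          refine ⟨pow_integrableOn b (hexp k hk2), ?_⟩
          refine InX.congr (InX.smul _ ?_) (RL_pow_ae b hα (hexp k hk2)).symm
          have hmin : min (((m + 1 : ℕ):ℝ) * δ) (β n) ≤ β n := min_le_right _ _
          rcases hdich j hj.1 hj.2 with ⟨m', hm'⟩ | h
          · rw [hm']
            rcases le_or_gt k m' with hkm | hkm
            · have : (k:ℝ) ≤ m' := by exact_mod_cast hkm
              exact InX.of_pow hg' (by linarith)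
            · refine ⟨0, IsRep.of_mem (Submodule.subset_span ⟨k - m', by omega, by omega, ?_⟩)⟩
              ext t
              rw [Nat.cast_sub hkm.le]
              congr 1; ring
          · exact InX.of_pow hg' (by linarith)
  have huB : InX b (P0 (β n) N) (β n) u := by
    obtain ⟨m, hm⟩ := exists_nat_ge (β n / δ)
    have := hboot m
    rwa [min_eq_right ((div_le_iff₀ hδ).1 hm)] at this
  have hj : ∀ j, 1 ≤ j → j < n → InX b (Pw (β j)) (β j) u := by
    intro j h1 h2
    have hpj := hpos j h1 h2.le
    have hlt := hmono j n h1 h2 le_rfl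
    have := InX.RL (α := 0) (Q := Pw (β j)) (δ := β j) le_rfl hB hpj (by linarith) ?_ huB
    · rwa [RL_zero] at this
    · refine span_InX le_rfl hpj _ ?_
      rintro _ ⟨k, hk1, hk2, rfl⟩
      have hkN : (k:ℝ) ≤ N := by exact_mod_cast hk2
      refine ⟨pow_integrableOn b (hexp k hk2), ?_⟩
      rw [RL_zero]
      rcases hdich j h1 h2 with ⟨m', hm'⟩ | h
      · rcases le_or_gt k m' with hkm | hkm
        · have : (k:ℝ) ≤ m' := by exact_mod_cast hkm
          exact InX.of_pow hpj (by linarith)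
        · have hc : ((k - m' : ℕ) : ℝ) = k - m' := Nat.cast_sub hkm.le
          refine ⟨0, IsRep.of_mem (Submodule.subset_span ⟨k - m', by omega, ?_, ?_⟩)⟩
          · rw [hc]; linarith [hexp k hk2]
          · ext t
            rw [hc]
            congr 1; linarith
      · exact InX.of_pow hpj (by linarith)
  choose! φ hφ using hj
  have hrep : IsRep b (Pw (β n)) (β n) (w + ∑ j ∈ Finset.Ico 1 n, (-c j) • φ j) u := by
    refine IsRep.congr ?_ hu'
    refine IsRep.add hB ?_ ?_
    · have h1 := (IsRep.of_RL (P := Pw (β n)) (γ := β n) hw)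
      have h2 : IsRep b (Pw (β n)) (β n) 0
          (∑ k ∈ Finset.Icc 1 N, d k • (fun t : ℝ => t ^ (β n - (k:ℝ)))) := by
        refine IsRep.of_mem (Submodule.sum_mem _ fun k hk => Submodule.smul_mem _ _ ?_)
        rw [Finset.mem_Icc] at hk
        exact Submodule.subset_span ⟨k, hk.1, hexp k hk.2, rfl⟩
      have := h1.add hB h2
      rwa [add_zero] at this
    · refine IsRep.sum hB _ _ _ fun j hj => IsRep.smul _ ?_
      rw [Finset.mem_Ico] at hj
      have hα : 0 ≤ β n - β j := by linarith [hδle j hj.1 hj.2]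
      have := IsRep.RL hα (hpos j hj.1 hj.2.le) (Pw_RL b (β j) hα) (hφ j hj.1 hj.2)
      rwa [add_sub_cancel] at this
  have hall : ∀ j, 1 ≤ j → j ≤ n → IsRLDeriv b (β j) u
      (Function.update φ n (w + ∑ j ∈ Finset.Ico 1 n, (-c j) • φ j) j) := by
    intro j h1 h2
    rcases h2.eq_or_lt with rfl | h
    · rw [Function.update_self]
      exact hrep.isRLDeriv hb hB
    · rw [Function.update_of_ne h.ne]
      exact (hφ j h1 h).isRLDeriv hb (hpos j h1 h2)
  refine ⟨fun j h1 h2 => memX_of_isRLDeriv hu (hall j h1 h2), _, hall, ?_⟩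
  refine Eventually.of_forall fun t => ?_
  simp only [Function.update_self]
  have : ∑ j ∈ Finset.Ico 1 n, c j * Function.update φ n
      (w + ∑ j ∈ Finset.Ico 1 n, (-c j) • φ j) j t = ∑ j ∈ Finset.Ico 1 n, c j * φ j t := by
    refine Finset.sum_congr rfl fun j hj => ?_
    rw [Finset.mem_Ico] at hj
    rw [Function.update_of_ne hj.2.ne]
  rw [this]
  simp only [Pi.add_apply, Finset.sum_apply, Pi.smul_apply, smul_eq_mul, neg_mul,
    Finset.sum_neg_distrib]
  ring
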